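/- arXiv:2408.07764 — 2 statements merged into one kernel-verified Lean document; each statement's English description precedes it below -/
import Mathlib

section
/- For q = 2^s with s ≥ 2 and all β, γ ∈ F_q, the matrix identity U_β^{(5)} · X^γ · U_β^{(5)} = ε(tr(βγ^5)) · X^γ · Z^{(βγ)^{2^{s−2}} + βγ^4} holds in the q×q complex matrices (note that x ↦ x^{2^{s−2}} is the unique fourth-root map in F_q). -/
noncomputable section

/-- The trace map `tr : F_{2^s} → F_2 ⊆ F_{2^s}`, `tr γ = Σ_{i=0}^{s-1} γ^{2^i}`
(its values lie in the prime field `{0, 1}`). -/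
def trF {F : Type} [Field F] (s : ℕ) (x : F) : F := ∑ i ∈ Finset.range s, x ^ 2 ^ i

/-- `ε ∘ tr : F_{2^s} → ℂ`, where `ε 0 = 1` and `ε 1 = -1` on the prime field `F_2`. -/
def epsTr {F : Type} [Field F] [DecidableEq F] (s : ℕ) (x : F) : ℂ := if trF s x = 0 then 1 else -1

/-- The Pauli `X^β`: `(X^β)_{η,η'} = 1` if `η = η' + β`, else `0`. -/
def Xm {F : Type} [Field F] [Fintype F] [DecidableEq F] (β : F) : Matrix F F ℂ :=
  Matrix.of fun η η' => if η = η' + β then 1 else 0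

/-- The Pauli `Z^γ`: diagonal with entry `ε(tr(γη))` at `η`. -/
def Zm {F : Type} [Field F] [Fintype F] [DecidableEq F] (s : ℕ) (γ : F) : Matrix F F ℂ :=
  Matrix.diagonal fun η => epsTr s (γ * η)

/-- The diagonal gate `U_β^{(n)}` with diagonal entry `ε(tr(β η^n))` at `η`. -/
def Um {F : Type} [Field F] [Fintype F] [DecidableEq F] (s : ℕ) (n : ℕ) (β : F) :
    Matrix F F ℂ :=
  Matrix.diagonal fun η => epsTr s (β * η ^ n)

lemma trF_sq_aux {s : ℕ} {F : Type} [Field F] [Fintype F]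
    (hF : Fintype.card F = 2 ^ s) (x : F) : trF s (x ^ 2) = trF s x := by
  unfold trF
  have h1 := Finset.sum_range_succ (fun i => x ^ 2 ^ i) s
  have h2 := Finset.sum_range_succ' (fun i => x ^ 2 ^ i) s
  have h3 : x ^ 2 ^ s = x := by rw [← hF]; exact FiniteField.pow_card x
  have h4 : ∀ i, (x ^ 2) ^ 2 ^ i = x ^ 2 ^ (i + 1) := fun i => by
    rw [← pow_mul, pow_succ' 2 i]
  simp only [h4]
  rw [h1] at h2
  simp only [pow_zero, pow_one, h3] at h2
  exact (add_right_cancel h2).symm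

lemma trF_add_aux {s : ℕ} {F : Type} [Field F] [CharP F 2] (x y : F) :
    trF s (x + y) = trF s x + trF s y := by
  have : Fact (Nat.Prime 2) := ⟨Nat.prime_two⟩
  unfold trF
  rw [← Finset.sum_add_distrib]
  exact Finset.sum_congr rfl fun i _ => add_pow_char_pow x y 2 i

lemma trF_idem_aux {s : ℕ} {F : Type} [Field F] [Fintype F] [CharP F 2]
    (hF : Fintype.card F = 2 ^ s) (x : F) : trF s x = 0 ∨ trF s x = 1 := by
  have : Fact (Nat.Prime 2) := ⟨Nat.prime_two⟩
  have h : (trF s x) ^ 2 = trF s x := by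
    conv_rhs => rw [← trF_sq_aux hF]
    unfold trF
    rw [sum_pow_char 2]
    exact Finset.sum_congr rfl fun i _ => by rw [← pow_mul, ← pow_mul, mul_comm]
  have h' : trF s x * (trF s x - 1) = 0 := by linear_combination h
  rcases mul_eq_zero.mp h' with h | h
  · exact Or.inl h
  · exact Or.inr (sub_eq_zero.mp h)

lemma epsTr_add_aux {s : ℕ} {F : Type} [Field F] [Fintype F] [DecidableEq F] [CharP F 2]
    (hF : Fintype.card F = 2 ^ s) (x y : F) : epsTr s (x + y) = epsTr s x * epsTr s y := by
  unfold epsTr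
  rw [trF_add_aux]
  rcases trF_idem_aux hF x with h | h <;> rcases trF_idem_aux hF y with h' | h' <;>
    simp [h, h', CharTwo.add_self_eq_zero]

/-- For `q = 2^s`, `s ≥ 2`: `U_β^{(5)} X^γ U_β^{(5)} = ε(tr(βγ^5)) X^γ Z^{(βγ)^{2^{s-2}} + βγ^4}`
(here `x ↦ x^{2^{s−2}}` is the unique fourth-root map in `F_q`). -/
theorem U5_conjugation_identity
    {s : ℕ} (hs : 2 ≤ s) {F : Type} [Field F] [Fintype F] [DecidableEq F]
    (hF : Fintype.card F = 2 ^ s) (β γ : F) :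
    Um s 5 β * Xm γ * Um s 5 β =
      epsTr s (β * γ ^ 5) • (Xm γ * Zm s ((β * γ) ^ 2 ^ (s - 2) + β * γ ^ 4)) := by
  have : Fact (Nat.Prime 2) := ⟨Nat.prime_two⟩
  have : CharP F 2 := charP_of_card_eq_prime_pow hF
  have key : ∀ x : F, epsTr s (β * (x + γ) ^ 5) * epsTr s (β * x ^ 5) =
      epsTr s (β * γ ^ 5) * epsTr s (((β * γ) ^ 2 ^ (s - 2) + β * γ ^ 4) * x) := by
    intro x
    have h2 : (2 : F) = 0 := CharTwo.two_eq_zero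
    have hr : ((β * γ) ^ 2 ^ (s - 2)) ^ 4 = β * γ := by
      have : 2 ^ (s - 2) * 4 = 2 ^ s := by
        rw [show (4 : ℕ) = 2 ^ 2 by norm_num, ← pow_add, Nat.sub_add_cancel hs]
      rw [← pow_mul, this, ← hF, FiniteField.pow_card]
    have ht : epsTr s ((β * γ) ^ 2 ^ (s - 2) * x) = epsTr s (β * γ * x ^ 4) := by
      unfold epsTr
      rw [← trF_sq_aux hF ((β * γ) ^ 2 ^ (s - 2) * x), ← trF_sq_aux hF (_ ^ 2), ← pow_mul,
        mul_pow _ x, hr]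
    rw [add_mul, epsTr_add_aux hF (_ * x), ht, ← epsTr_add_aux hF, ← epsTr_add_aux hF,
      ← epsTr_add_aux hF]
    congr 1
    linear_combination (β * (x ^ 5 + 2 * x ^ 4 * γ + 5 * x ^ 3 * γ ^ 2 + 5 * x ^ 2 * γ ^ 3
      + 2 * x * γ ^ 4)) * h2
  ext i j
  simp only [Um, Zm, Xm, Matrix.smul_apply, Matrix.mul_diagonal, Matrix.diagonal_mul,
    Matrix.of_apply, smul_eq_mul]
  split_ifs with h
  · subst h
    simpa using key j
  · simp
end
end

section
/- For q = 2^s with s ≥ 5, the diagonal matrix U_1^{(7)} is unitary, belongs to the third level 𝒞^{(3)} of the Clifford hierarchy, and does not belong to the Clifford group 𝒞; i.e. U_1^{(7)} is a non-Clifford gate in the third level of the Clifford hierarchy of a q-dimensional qudit. -/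
noncomputable section

/-- The single-qudit Pauli group (as a set of matrices):
`{z • X^β Z^γ : z ∈ {1, i, −1, −i}, β, γ ∈ F_q}`. -/
def PauliSet (s : ℕ) (F : Type) [Field F] [Fintype F] [DecidableEq F] :
    Set (Matrix F F ℂ) :=
  {M | ∃ z ∈ ({1, Complex.I, -1, -Complex.I} : Set ℂ), ∃ β γ : F, M = z • (Xm β * Zm s γ)}

/-- The single-qudit Clifford group: unitaries normalising the Pauli group. -/
def CliffordSet (s : ℕ) (F : Type) [Field F] [Fintype F] [DecidableEq F] :
    Set (Matrix F F ℂ) :=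
  {U | U ∈ unitary (Matrix F F ℂ) ∧ ∀ P ∈ PauliSet s F, U * P * star U ∈ PauliSet s F}

/-- The third level of the Clifford hierarchy: unitaries mapping Paulis into the
Clifford group under conjugation. -/
def ThirdLevelSet (s : ℕ) (F : Type) [Field F] [Fintype F] [DecidableEq F] :
    Set (Matrix F F ℂ) :=
  {U | U ∈ unitary (Matrix F F ℂ) ∧ ∀ P ∈ PauliSet s F, U * P * star U ∈ CliffordSet s F}

set_option linter.unusedSectionVars false

section helpers

variable {F : Type} [Field F] [Fintype F] [DecidableEq F]

/-- Monomial matrix `X^β * diag d`. -/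
def Mono (β : F) (d : F → ℂ) : Matrix F F ℂ :=
  Matrix.of fun η η' => if η = η' + β then d η' else 0

lemma Xm_mul_diagonal (β : F) (d : F → ℂ) : Xm β * Matrix.diagonal d = Mono β d := by
  ext a b
  simp [Xm, Mono, Matrix.mul_diagonal]

lemma Mono_mul (β β' : F) (d d' : F → ℂ) :
    Mono β d * Mono β' d' = Mono (β' + β) (fun η => d (η + β') * d' η) := by
  ext a b
  simp only [Mono, Matrix.mul_apply, Matrix.of_apply]
  rw [Finset.sum_eq_single (b + β')]
  · simp [add_assoc]
  · intro c _ hc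
    simp [hc]
  · simp

lemma diagonal_eq_Mono (d : F → ℂ) : Matrix.diagonal d = Mono 0 d := by
  ext a b
  simp only [Mono, Matrix.diagonal_apply, Matrix.of_apply, add_zero]
  split_ifs with h
  · rw [h]
  · rfl

lemma smul_Mono (z : ℂ) (β : F) (d : F → ℂ) : z • Mono β d = Mono β (fun η => z * d η) := by
  ext a b
  simp [Mono]

lemma Mono_inj {β β' : F} {d d' : F → ℂ} (hd : ∀ x, d x ≠ 0) (h : Mono β d = Mono β' d') :
    β = β' ∧ d = d' := by
  have hb : β = β' := by
    have := congrFun (congrFun h β) 0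
    by_contra hne
    simp [Mono, hne, hd] at this
  refine ⟨hb, ?_⟩
  subst hb
  funext x
  have := congrFun (congrFun h (x + β)) x
  simpa [Mono] using this

lemma charTwo {s : ℕ} (hs : 5 ≤ s) (hF : Fintype.card F = 2 ^ s) : CharP F 2 := by
  obtain ⟨p, hp⟩ := CharP.exists F
  obtain ⟨n, hpp, hc⟩ := FiniteField.card F p
  have : p ∣ 2 ^ s := by
    rw [← hF, hc]
    exact dvd_pow_self p n.ne_zero
  have h2 := (Nat.prime_dvd_prime_iff_eq hpp Nat.prime_two).1 (hpp.dvd_of_dvd_pow this)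
  rw [h2] at hp
  exact hp

lemma star_Mono [CharP F 2] (β : F) (d : F → ℂ) :
    star (Mono β d) = Mono β (fun η => star (d (η + β))) := by
  ext a b
  simp only [Mono, Matrix.star_apply, Matrix.of_apply]
  have h : (b = a + β) ↔ (a = b + β) := by
    constructor <;> rintro rfl <;> simp [add_assoc, CharTwo.add_self_eq_zero]
  by_cases hb : a = b + β
  · rw [if_pos (h.2 hb), if_pos hb, hb]
  · rw [if_neg (fun hh => hb (h.1 hh)), if_neg hb, star_zero]

lemma trF_add [CharP F 2] (s : ℕ) (x y : F) : trF s (x + y) = trF s x + trF s y := by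
  simp [trF, add_pow_char_pow, Finset.sum_add_distrib]

lemma trF_sq [CharP F 2] {s : ℕ} (hF : Fintype.card F = 2 ^ s) (x : F) :
    trF s (x ^ 2) = trF s x := by
  unfold trF
  have h1 : ∀ i, (x ^ 2) ^ 2 ^ i = x ^ 2 ^ (i + 1) := fun i => by rw [← pow_mul, pow_succ' 2 i]
  simp only [h1]
  have := Finset.sum_range_succ' (fun i => x ^ 2 ^ i) s
  rw [Finset.sum_range_succ] at this
  rw [← hF, FiniteField.pow_card] at this
  simpa using this.symm

lemma trF_zero_or_one [CharP F 2] {s : ℕ} (hF : Fintype.card F = 2 ^ s) (x : F) :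
    trF s x = 0 ∨ trF s x = 1 := by
  have h : trF s x ^ 2 = trF s x := by
    conv_rhs => rw [← trF_sq hF]
    unfold trF
    rw [sum_pow_char]
    exact Finset.sum_congr rfl fun i _ => by rw [← pow_mul, ← pow_mul, mul_comm]
  have : trF s x * (trF s x - 1) = 0 := by linear_combination h
  rcases mul_eq_zero.1 this with h | h
  · exact Or.inl h
  · exact Or.inr (sub_eq_zero.1 h)

lemma e_add [CharP F 2] {s : ℕ} (hF : Fintype.card F = 2 ^ s) (x y : F) :
    epsTr s (x + y) = epsTr s x * epsTr s y := by
  unfold epsTr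
  rw [trF_add]
  rcases trF_zero_or_one hF x with h | h <;> rcases trF_zero_or_one hF y with h' | h' <;>
    simp [h, h', CharTwo.add_self_eq_zero]

lemma e_sq [CharP F 2] {s : ℕ} (hF : Fintype.card F = 2 ^ s) (x : F) :
    epsTr s (x ^ 2) = epsTr s x := by
  unfold epsTr
  rw [trF_sq hF]

lemma e_cases (s : ℕ) (x : F) : epsTr s x = 1 ∨ epsTr s x = -1 := by
  unfold epsTr
  split_ifs <;> simp

lemma e_mul_self (s : ℕ) (x : F) : epsTr s x * epsTr s x = 1 := by
  rcases e_cases s x with h | h <;> simp [h]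

lemma e_ne (s : ℕ) (x : F) : epsTr s x ≠ 0 := by
  rcases e_cases s x with h | h <;> simp [h]

lemma e_star (s : ℕ) (x : F) : star (epsTr s x) = epsTr s x := by
  rcases e_cases s x with h | h <;> simp [h]

open Polynomial in
lemma exists_not_root (p : F[X]) (hp : p ≠ 0) (hd : p.natDegree < Fintype.card F) :
    ∃ x, p.eval x ≠ 0 := by
  by_contra! h
  exact hp (Polynomial.eq_zero_of_natDegree_lt_card_of_eval_eq_zero p Function.injective_id h hd)

open Polynomial in
lemma e_nontrivial {s : ℕ} (hs : 5 ≤ s) (hF : Fintype.card F = 2 ^ s) :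
    ∃ x : F, epsTr s x = -1 := by
  obtain ⟨x, hx⟩ := exists_not_root (∑ i ∈ Finset.range s, (X : F[X]) ^ 2 ^ i)
    (by
      intro h
      have := congrArg (fun p : F[X] => p.coeff 1) h
      simp only [finsetSum_coeff, coeff_X_pow, coeff_zero] at this
      rw [Finset.sum_eq_single 0] at this
      · simp at this
      · intro b _ hb
        rw [if_neg]
        exact (Nat.one_lt_two_pow hb).ne
      · intro h0
        simp at h0
        omega)
    (by
      rw [hF]
      refine lt_of_le_of_lt (natDegree_sum_le_of_forall_le (n := 2 ^ (s - 1)) _ _ ?_)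
        (Nat.pow_lt_pow_right (by norm_num) (by omega))
      intro i hi
      rw [natDegree_X_pow]
      exact Nat.pow_le_pow_right (by norm_num) (by have := Finset.mem_range.1 hi; omega))
  refine ⟨x, ?_⟩
  simp only [eval_finsetSum, eval_pow, eval_X] at hx
  unfold epsTr trF
  rw [if_neg hx]

open Polynomial in
lemma exists_pow16 {s : ℕ} (hs : 5 ≤ s) (hF : Fintype.card F = 2 ^ s) :
    ∃ x : F, x ^ 16 - x ≠ 0 := by
  have h : (X ^ 16 - X : F[X]) ≠ 0 := FiniteField.X_pow_card_sub_X_ne_zero F (by norm_num)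
  have hd : (X ^ 16 - X : F[X]).natDegree = 16 :=
    FiniteField.X_pow_card_sub_X_natDegree_eq F (by norm_num)
  obtain ⟨x, hx⟩ := exists_not_root _ h (by
    rw [hd, hF]
    calc 16 < 2 ^ 5 := by norm_num
      _ ≤ 2 ^ s := Nat.pow_le_pow_right (by norm_num) hs)
  exact ⟨x, by simpa using hx⟩

lemma exists_sqrt [CharP F 2] (c : F) : ∃ d : F, d ^ 2 = c := by
  have hi : Function.Injective (fun x : F => x ^ 2) := fun x y h => by
    have : (x - y) ^ 2 = 0 := by
      rw [sub_pow_char]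
      exact sub_eq_zero.2 h
    exact sub_eq_zero.1 (pow_eq_zero_iff (two_ne_zero) |>.1 this)
  exact (Finite.injective_iff_surjective.1 hi) c

/-- The second derivative of `η ^ 7`. -/
lemma second_deriv [CharP F 2] {s : ℕ} (hF : Fintype.card F = 2 ^ s) (α β : F) :
    ∃ κ c : F, ∀ η : F, epsTr s ((η + β + α) ^ 7) * epsTr s ((η + α) ^ 7) *
      epsTr s ((η + β) ^ 7) * epsTr s (η ^ 7) = epsTr s c * epsTr s (κ * η) := by
  obtain ⟨u, hu⟩ := exists_sqrt (α * β ^ 4 + β * α ^ 4)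
  obtain ⟨v, hv⟩ := exists_sqrt (α * β ^ 2 + β * α ^ 2)
  obtain ⟨w, hw⟩ := exists_sqrt v
  refine ⟨(α ^ 2 * β ^ 4 + β ^ 2 * α ^ 4) + u + w, (α + β) ^ 7 + α ^ 7 + β ^ 7, fun η => ?_⟩
  have h2 : (2 : F) = 0 := CharTwo.two_eq_zero
  rw [add_mul, add_mul, e_add hF _ (w * η), e_add hF _ (u * η), ← e_sq hF (w * η),
    ← e_sq hF ((w * η) ^ 2), ← e_sq hF (u * η)]
  simp only [← e_add hF]
  congr 1
  have h1 : ((w * η) ^ 2) ^ 2 = (α * β ^ 2 + β * α ^ 2) * η ^ 4 := by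
    rw [← hv, ← hw]; ring
  have h3 : (u * η) ^ 2 = (α * β ^ 4 + β * α ^ 4) * η ^ 2 := by
    rw [← hu]; ring
  rw [h1, h3]
  clear h1 h3 hu hv hw
  grind

end helpers

theorem U7_nonClifford_third_level
    {s : ℕ} (hs : 5 ≤ s) {F : Type} [Field F] [Fintype F] [DecidableEq F]
    (hF : Fintype.card F = 2 ^ s) :
    Um s 7 (1 : F) ∈ unitary (Matrix F F ℂ) ∧
    Um s 7 (1 : F) ∈ ThirdLevelSet s F ∧
    Um s 7 (1 : F) ∉ CliffordSet s F := by
  haveI : CharP F 2 := charTwo hs hF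
  have hone : (1 : Matrix F F ℂ) = Mono 0 (fun _ => 1) := by
    rw [← diagonal_eq_Mono]; exact Matrix.diagonal_one.symm
  have hU : Um s 7 (1 : F) = Mono 0 (fun η => epsTr s (η ^ 7)) := by
    simp only [Um, one_mul, diagonal_eq_Mono]
  have hP : ∀ (z : ℂ) (β γ : F), z • (Xm β * Zm s γ) = Mono β (fun η => z * epsTr s (γ * η)) := by
    intro z β γ
    rw [Zm, Xm_mul_diagonal, smul_Mono]
  have hunit : ∀ (β : F) (d : F → ℂ), (∀ x, d x * star (d x) = 1) →
      Mono β d ∈ unitary (Matrix F F ℂ) := by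
    intro β d hd
    have hd' : ∀ x, star (d x) * d x = 1 := fun x => by rw [mul_comm]; exact hd x
    rw [Unitary.mem_iff, star_Mono, Mono_mul, Mono_mul, hone, CharTwo.add_self_eq_zero]
    exact ⟨by congr 1; funext η; rw [add_assoc, CharTwo.add_self_eq_zero, add_zero]; exact hd' _, by congr 1; funext η; exact hd _⟩
  have hUu : Um s 7 (1 : F) ∈ unitary (Matrix F F ℂ) := by
    rw [hU]
    exact hunit _ _ fun x => by rw [e_star, e_mul_self]
  have hconj : ∀ (β : F) (d : F → ℂ), Um s 7 (1 : F) * Mono β d * star (Um s 7 (1 : F)) =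
      Mono β (fun η => epsTr s ((η + β) ^ 7) * d η * epsTr s (η ^ 7)) := by
    intro β d
    rw [hU, star_Mono, Mono_mul, Mono_mul]
    simp only [add_zero, zero_add, e_star]
  refine ⟨hUu, ⟨hUu, ?_⟩, ?_⟩
  · rintro P ⟨z, hz, β, γ, rfl⟩
    rw [hP, hconj]
    have hzz : z * star z = 1 := by
      rcases hz with h | h | h | h <;> (rw [h]; simp)
    refine ⟨hunit _ _ fun x => ?_, ?_⟩
    · simp only [star_mul, e_star]
      linear_combination (epsTr s ((x + β) ^ 7) * epsTr s (γ * x) * epsTr s (x ^ 7)) ^ 2 * hzz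
        + (epsTr s (γ * x) * epsTr s (x ^ 7)) ^ 2 * e_mul_self s ((x + β) ^ 7)
        + (epsTr s (x ^ 7)) ^ 2 * e_mul_self s (γ * x) + e_mul_self s (x ^ 7)
    · rintro Q ⟨w, hw, α, δ, rfl⟩
      rw [hP, star_Mono, Mono_mul, Mono_mul]
      obtain ⟨κ, c, hκ⟩ := second_deriv hF α β
      have hα : β + (α + β) = α := by
        rw [add_comm α, ← add_assoc, CharTwo.add_self_eq_zero, zero_add]
      refine ⟨epsTr s (c + κ * β + γ * α + δ * β) * w, ?_, α, κ + δ, ?_⟩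
      · rcases e_cases s (c + κ * β + γ * α + δ * β) with h | h <;> rw [h] <;>
          rcases hw with h | h | h | h <;> (rw [h]; simp)
      · rw [hP, hα]
        congr 1
        funext η
        have h1 := hκ (η + β)
        have hb : η + β + β = η := by rw [add_assoc, CharTwo.add_self_eq_zero, add_zero]
        have hb2 : η + β + α + β = η + α := by rw [add_right_comm, hb]
        simp only [hb, hb2, star_mul, e_star] at h1 ⊢
        simp only [mul_add, add_mul, e_add hF] at h1 ⊢
        have hg := e_mul_self s (γ * η)
        have hg' := e_mul_self s (γ * β)
        generalize epsTr s (γ * η) = a1 at *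
        generalize epsTr s (γ * β) = a2 at *
        linear_combination
          (w * epsTr s (δ * η) * epsTr s (δ * β) * epsTr s (γ * α)) * h1 * (z * star z * a1 ^ 2 * a2 ^ 2)
          + (epsTr s c * epsTr s (κ * β) * epsTr s (κ * η) * w * epsTr s (δ * η) * epsTr s (δ * β) * epsTr s (γ * α)) *
            (a1 ^ 2 * a2 ^ 2 * hzz + a2 ^ 2 * hg + hg')
  · rintro ⟨-, h⟩
    obtain ⟨z, -, β, γ, h⟩ := h (1 • (Xm 1 * Zm s 0)) ⟨1, by simp, 1, 0, by simp⟩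
    have h' := hP 1 1 0
    rw [one_smul] at h' h
    rw [h', hP, hconj] at h
    obtain ⟨-, h⟩ := Mono_inj (fun x => by simp [e_ne]) h
    have e0 : epsTr s (0 : F) = 1 := by
      have := e_mul_self s (0 : F)
      rw [← e_add hF, add_zero] at this
      exact this
    have key : ∀ η, epsTr s ((η + 1) ^ 7) * epsTr s (η ^ 7) = z * epsTr s (γ * η) := by
      intro η
      have := congrFun h η
      simpa [e0] using this
    have hz := key 0
    simp [e0] at hz
    obtain ⟨α, hα⟩ := exists_pow16 hs hF
    obtain ⟨y, hy⟩ := e_nontrivial hs hF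
    obtain ⟨t, ht⟩ := exists_sqrt (y / (α ^ 16 - α))
    obtain ⟨η, hη⟩ := exists_sqrt t
    have hyη : y = η ^ 4 * (α ^ 16 - α) := by
      have : η ^ 4 = y / (α ^ 16 - α) := by rw [← ht, ← hη]; ring
      rw [this, div_mul_cancel₀ _ hα]
    have h2 : (2 : F) = 0 := CharTwo.two_eq_zero
    have hsum : epsTr s y = epsTr s (η * (α ^ 2 + α ^ 4) + η ^ 2 * (α + α ^ 4) +
        η ^ 4 * (α + α ^ 2)) := by
      rw [e_add hF, e_add hF, ← e_sq hF (η * _), ← e_sq hF ((η * _) ^ 2), ← e_sq hF (η ^ 2 * _),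
        ← e_add hF, ← e_add hF, hyη]
      congr 1
      grind
    have hsum2 : η * (α ^ 2 + α ^ 4) + η ^ 2 * (α + α ^ 4) + η ^ 4 * (α + α ^ 2) =
        ((η + α + 1) ^ 7 + (η + α) ^ 7) + ((η + 1) ^ 7 + η ^ 7) + ((α + 1) ^ 7 + α ^ 7) + 1 := by
      grind
    rw [hsum, hsum2] at hy
    simp only [e_add hF] at hy
    rw [key, key, key, mul_add, e_add hF, ← hz] at hy
    have a1 := e_mul_self s (1 : F)
    have a2 := e_mul_self s (γ * η)
    have a3 := e_mul_self s (γ * α)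
    have : (1 : ℂ) = -1 := by
      linear_combination hy - (epsTr s (γ * η) * epsTr s (γ * α)) ^ 2 * (epsTr s (1 : F) ^ 2 + 1) * a1
        - epsTr s (γ * α) ^ 2 * a2 - a3
    norm_num at this
end
end
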